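/- The only pair of positive integers (a, b) satisfying the Diophantine equation b(b+1)(b+2) = 2·a(a+1)(a+2) is a = 3, b = 4. -/

import Mathlib

/-!
Put `x = a + 1`, `y = b + 1`, so that `y³ - y = 2 (x³ - x)`, and then `d = y - 2x`, `w = y - x`. The
equation becomes `d³ - 6dw² + 6w³ = d`. Dividing out `g = gcd(d, w)` gives `d = e g³`, `w = g s` with
`e ∣ 6` and, for `T = g²`, the Thue equation `e³T³ - 6eTs² + 6s³ = e` (`descent`). For each of the
four values of `|e|` this says that an element of `ℤ[∛2]` with coordinates linear in `T`, `s` has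
norm `1`, hence is a power of the unit `δ = 1 + ∛2 + ∛4` (`eq_zpow_of_norm_eq_one`), and that its
coordinates satisfy a linear relation, namely `B = C`, `A = B`, `A = C` or `B = 2C`.

Skolem's 3-adic method finds the powers of `δ` that satisfy such a relation. One has `δ²⁷ ≡ 1` modulo
`27`, and more precisely `δ^(27n) = 1 + M (kβ + 27γ)` with `M ≠ 0`, `3 ∤ k` and `β = 20∛2 + 25∛4`
whenever `n ≠ 0` (`near_of_ne_zero`). In a residue class of exponents modulo `27` that contains a
solution, the first-order term shows that it is the only one; the other classes are excluded by
congruences modulo powers of `3`.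
-/

namespace Tetrahedral

/-- The ring `ℤ[∛2]`; the triple `(a, b, c)` stands for `a + b ∛2 + c ∛4`. -/
@[ext] structure R where
  a : ℤ
  b : ℤ
  c : ℤ

namespace R

instance : Zero R := ⟨⟨0, 0, 0⟩⟩
instance : One R := ⟨⟨1, 0, 0⟩⟩
instance : Add R := ⟨fun x y => ⟨x.a + y.a, x.b + y.b, x.c + y.c⟩⟩
instance : Neg R := ⟨fun x => ⟨-x.a, -x.b, -x.c⟩⟩
instance : Sub R := ⟨fun x y => ⟨x.a - y.a, x.b - y.b, x.c - y.c⟩⟩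
instance : Mul R := ⟨fun x y => ⟨x.a * y.a + 2 * (x.b * y.c) + 2 * (x.c * y.b),
  x.a * y.b + x.b * y.a + 2 * (x.c * y.c), x.a * y.c + x.b * y.b + x.c * y.a⟩⟩
instance : NatCast R := ⟨fun n => ⟨n, 0, 0⟩⟩
instance : IntCast R := ⟨fun n => ⟨n, 0, 0⟩⟩

@[simp] lemma zero_a : (0 : R).a = 0 := rfl
@[simp] lemma zero_b : (0 : R).b = 0 := rfl
@[simp] lemma zero_c : (0 : R).c = 0 := rfl
@[simp] lemma one_a : (1 : R).a = 1 := rfl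
@[simp] lemma one_b : (1 : R).b = 0 := rfl
@[simp] lemma one_c : (1 : R).c = 0 := rfl
@[simp] lemma add_a (x y : R) : (x + y).a = x.a + y.a := rfl
@[simp] lemma add_b (x y : R) : (x + y).b = x.b + y.b := rfl
@[simp] lemma add_c (x y : R) : (x + y).c = x.c + y.c := rfl
@[simp] lemma neg_a (x : R) : (-x).a = -x.a := rfl
@[simp] lemma neg_b (x : R) : (-x).b = -x.b := rfl
@[simp] lemma neg_c (x : R) : (-x).c = -x.c := rfl
@[simp] lemma sub_a (x y : R) : (x - y).a = x.a - y.a := rfl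
@[simp] lemma sub_b (x y : R) : (x - y).b = x.b - y.b := rfl
@[simp] lemma sub_c (x y : R) : (x - y).c = x.c - y.c := rfl
@[simp] lemma mul_a (x y : R) :
    (x * y).a = x.a * y.a + 2 * (x.b * y.c) + 2 * (x.c * y.b) := rfl
@[simp] lemma mul_b (x y : R) :
    (x * y).b = x.a * y.b + x.b * y.a + 2 * (x.c * y.c) := rfl
@[simp] lemma mul_c (x y : R) : (x * y).c = x.a * y.c + x.b * y.b + x.c * y.a := rfl
@[simp] lemma natCast_a (n : ℕ) : (n : R).a = n := rfl
@[simp] lemma natCast_b (n : ℕ) : (n : R).b = 0 := rfl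
@[simp] lemma natCast_c (n : ℕ) : (n : R).c = 0 := rfl
@[simp] lemma intCast_a (n : ℤ) : (n : R).a = n := rfl
@[simp] lemma intCast_b (n : ℤ) : (n : R).b = 0 := rfl
@[simp] lemma intCast_c (n : ℤ) : (n : R).c = 0 := rfl

instance : CommRing R where
  add_assoc x y z := by ext <;> simp <;> ring
  zero_add x := by ext <;> simp
  add_zero x := by ext <;> simp
  add_comm x y := by ext <;> simp <;> ring
  left_distrib x y z := by ext <;> simp <;> ring
  right_distrib x y z := by ext <;> simp <;> ring
  zero_mul x := by ext <;> simp
  mul_zero x := by ext <;> simp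
  mul_assoc x y z := by ext <;> simp <;> ring
  one_mul x := by ext <;> simp
  mul_one x := by ext <;> simp
  mul_comm x y := by ext <;> simp <;> ring
  neg_add_cancel x := by ext <;> simp
  sub_eq_add_neg x y := by ext <;> simp <;> ring
  natCast_zero := by ext <;> simp
  natCast_succ n := by ext <;> simp
  intCast_ofNat n := by ext <;> simp
  intCast_negSucc n := by ext <;> simp; omega
  nsmul := nsmulRec
  zsmul := zsmulRec

end R

/-- The norm from `ℤ[∛2]` to `ℤ`. -/
def norm : R →* ℤ where
  toFun x := x.a ^ 3 + 2 * x.b ^ 3 + 4 * x.c ^ 3 - 6 * x.a * x.b * x.c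
  map_one' := by simp
  map_mul' x y := by simp; ring

lemma norm_apply (x : R) :
    norm x = x.a ^ 3 + 2 * x.b ^ 3 + 4 * x.c ^ 3 - 6 * x.a * x.b * x.c := rfl

/-- The unit `δ = 1 + ∛2 + ∛4`, with inverse `∛2 - 1`. -/
def δ : Rˣ where
  val := ⟨1, 1, 1⟩
  inv := ⟨-1, 1, 0⟩
  val_inv := by ext <;> simp
  inv_val := by ext <;> simp

/-- The embedding of `ℤ[∛2]` into `ℝ` attached to a real cube root `t` of `2`. -/
def toReal (t : ℝ) (ht : t ^ 3 = 2) : R →+* ℝ where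
  toFun x := x.a + x.b * t + x.c * t ^ 2
  map_one' := by simp
  map_zero' := by simp
  map_add' x y := by simp; ring
  map_mul' x y := by
    simp
    linear_combination (-(x.b : ℝ) * y.c - x.c * y.b - x.c * y.c * t) * ht

lemma toReal_apply (t : ℝ) (ht : t ^ 3 = 2) (x : R) :
    toReal t ht x = x.a + x.b * t + x.c * t ^ 2 := rfl

lemma exists_cbrt : ∃ t : ℝ, t ^ 3 = 2 ∧ 1.25 < t ∧ t < 1.26 := by
  have h0 : (0 : ℝ) ≤ 2 ^ ((1 : ℝ) / 3) := by positivity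
  have h : ((2 : ℝ) ^ ((1 : ℝ) / 3)) ^ 3 = 2 := by
    rw [← Real.rpow_natCast, ← Real.rpow_mul (by norm_num)]; norm_num
  refine ⟨_, h, ?_, ?_⟩
  · apply lt_of_pow_lt_pow_left₀ 3 h0; rw [h]; norm_num
  · apply lt_of_pow_lt_pow_left₀ 3 (by norm_num); rw [h]; norm_num

/-- `p³ + q³ + r³ - 3pqr = (p + q + r) · ½ ((p - q)² + (q - r)² + (p - r)²)` for
`p = a`, `q = b ∛2`, `r = c ∛4`. -/
lemma norm_factor (t : ℝ) (ht : t ^ 3 = 2) (x : R) :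
    (norm x : ℝ) = toReal t ht x * (((x.a - x.b * t) ^ 2 + (x.b * t - x.c * t ^ 2) ^ 2
      + (x.a - x.c * t ^ 2) ^ 2) / 2) := by
  rw [norm_apply, toReal_apply]
  push_cast
  linear_combination (-(x.b : ℝ) ^ 3 - x.c ^ 3 * (t ^ 3 + 2) + 3 * x.a * x.b * x.c) * ht

/-- The conjugates of such an `x` are bounded by `1`, so its coordinates are at most `1` in absolute
value, and only finitely many elements remain. -/
lemma eq_one_of_small (t : ℝ) (ht : t ^ 3 = 2) (h1 : 1.25 < t) (h2 : t < 1.26) (x : R)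
    (hx : norm x = 1) (hl : 1 ≤ toReal t ht x) (hu : toReal t ht x < toReal t ht δ) : x = 1 := by
  have hf := norm_factor t ht x
  rw [hx] at hf
  have hδ : toReal t ht δ = 1 + t + t ^ 2 := by simp [toReal_apply, δ]
  have ht2 : t ^ 2 < 1.5876 := by nlinarith
  have ht2' : 1.5625 < t ^ 2 := by nlinarith
  rw [hδ] at hu
  have hS : ((x.a - x.b * t) ^ 2 + (x.b * t - x.c * t ^ 2) ^ 2 + (x.a - x.c * t ^ 2) ^ 2) ≤ 2 := by
    push_cast at hf
    nlinarith [sq_nonneg (x.a - x.b * t), sq_nonneg (x.b * t - x.c * t ^ 2),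
      sq_nonneg (x.a - x.c * t ^ 2)]
  rw [toReal_apply] at hl hu
  have key : ∀ p q r : ℝ, (p - q) ^ 2 + (q - r) ^ 2 + (p - r) ^ 2 ≤ 2 → 1 ≤ p + q + r →
      p + q + r < 3.85 → -1 < p ∧ p < 1.95 := by
    intro p q r h hl hu
    have h4 : (2 * p - q - r) ^ 2 ≤ 2 ^ 2 := by nlinarith [sq_nonneg (q - r)]
    have := abs_le_of_sq_le_sq' h4 (by norm_num)
    constructor <;> linarith [this.1, this.2]
  obtain ⟨a1, a2⟩ := key x.a (x.b * t) (x.c * t ^ 2) hS (by linarith) (by linarith)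
  obtain ⟨b1, b2⟩ := key (x.b * t) x.a (x.c * t ^ 2) (by linarith) (by linarith) (by linarith)
  obtain ⟨c1, c2⟩ := key (x.c * t ^ 2) x.a (x.b * t) (by linarith) (by linarith) (by linarith)
  have hb1 : (-1 : ℝ) < x.b := by nlinarith
  have hb2 : (x.b : ℝ) < 2 := by nlinarith
  have hc1 : (-1 : ℝ) < x.c := by nlinarith
  have hc2 : (x.c : ℝ) < 2 := by nlinarith
  have ha2 : (x.a : ℝ) < 2 := by linarith
  have a1' : -1 < x.a := by exact_mod_cast a1
  have a2' : x.a < 2 := by exact_mod_cast ha2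
  have b1' : -1 < x.b := by exact_mod_cast hb1
  have b2' : x.b < 2 := by exact_mod_cast hb2
  have c1' : -1 < x.c := by exact_mod_cast hc1
  have c2' : x.c < 2 := by exact_mod_cast hc2
  rw [norm_apply] at hx
  obtain ⟨a, b, c⟩ := x
  simp only at *
  interval_cases a <;> interval_cases b <;> interval_cases c <;> simp at hx hu ⊢
  · rfl

/-- The elements of norm `1` in `ℤ[∛2]` are the powers of `δ`. -/
lemma eq_zpow_of_norm_eq_one (x : R) (hx : norm x = 1) : ∃ n : ℤ, x = ((δ ^ n : Rˣ) : R) := by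
  obtain ⟨t, ht, h1, h2⟩ := exists_cbrt
  have hpos : 0 < toReal t ht x := by
    have hf := norm_factor t ht x
    rw [hx] at hf
    push_cast at hf
    by_contra h
    nlinarith [sq_nonneg (x.a - x.b * t), sq_nonneg (x.b * t - x.c * t ^ 2),
      sq_nonneg (x.a - x.c * t ^ 2)]
  have hδ : 1 < toReal t ht δ := by
    simp only [toReal_apply, δ]
    push_cast
    nlinarith
  obtain ⟨n, hn1, hn2⟩ := exists_mem_Ico_zpow hpos hδ
  have hmap : ∀ m : ℤ, toReal t ht ((δ ^ m : Rˣ) : R) = toReal t ht δ ^ m := by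
    intro m
    have := congrArg Units.val (map_zpow (Units.map (toReal t ht : R →* ℝ)) δ m)
    rw [Units.val_zpow_eq_zpow_val] at this
    exact this
  have hnorm : ∀ m : ℤ, norm ((δ ^ m : Rˣ) : R) = 1 := by
    intro m
    have h0 : Units.map norm δ = 1 := by ext; simp [norm_apply, δ]
    have := congrArg Units.val (map_zpow (Units.map norm) δ m)
    rw [h0, one_zpow] at this
    exact this
  have hq : 0 < toReal t ht δ ^ n := by positivity
  have hy : x * ((δ ^ (-n) : Rˣ) : R) = 1 := by
    apply eq_one_of_small t ht h1 h2
    · rw [map_mul, hx, hnorm, mul_one]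
    · rw [map_mul, hmap, zpow_neg, ← div_eq_mul_inv, le_div_iff₀ hq, one_mul]; exact hn1
    · rw [map_mul, hmap, zpow_neg, ← div_eq_mul_inv, div_lt_iff₀ hq, mul_comm,
        ← zpow_add_one₀ (by positivity)]
      exact hn2
  refine ⟨n, ?_⟩
  rw [zpow_neg] at hy
  exact (Units.mul_inv_eq_one).1 hy

/-- The first-order coefficient of `δ²⁷`: one has `δ²⁷ ≡ 1 + 27 β` modulo `27²`. -/
def β : R := ⟨0, 20, 25⟩

/-- `x = 1 + N (kβ + 27γ)` for some `γ`. -/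
def Near (N k : ℤ) (x : R) : Prop := ∃ γ : R, x = 1 + (N : R) * ((k : R) * β + 27 * γ)

lemma Near.mul {N k l : ℤ} {x y : R} (hN : 27 ∣ N) (hx : Near N k x) (hy : Near N l y) :
    Near N (k + l) (x * y) := by
  obtain ⟨M, rfl⟩ := hN
  obtain ⟨γ, rfl⟩ := hx
  obtain ⟨γ', rfl⟩ := hy
  refine ⟨γ + γ' + M * (k * β + 27 * γ) * (l * β + 27 * γ'), ?_⟩
  push_cast
  ring

lemma Near.pow {N k : ℤ} {x : R} (hN : 27 ∣ N) (hx : Near N k x) (n : ℕ) :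
    Near N (n * k) (x ^ n) := by
  induction n with
  | zero => exact ⟨0, by simp⟩
  | succ n ih =>
    rw [pow_succ]
    convert ih.mul hN hx using 1
    push_cast
    ring

lemma Near.cube {N k : ℤ} {x : R} (hN : 27 ∣ N) (hx : Near N k x) : Near (3 * N) k (x ^ 3) := by
  obtain ⟨M, rfl⟩ := hN
  obtain ⟨γ, rfl⟩ := hx
  refine ⟨γ + M * (k * β + 27 * γ) ^ 2 + 9 * M ^ 2 * (k * β + 27 * γ) ^ 3, ?_⟩
  push_cast
  ring

lemma Near.pow_three_pow {k : ℤ} {x : R} (hx : Near 27 k x) (j : ℕ) :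
    Near (27 * 3 ^ j) k (x ^ 3 ^ j) := by
  induction j with
  | zero => simpa using hx
  | succ j ih =>
    have := ih.cube (Dvd.intro _ rfl)
    rw [← pow_mul, ← pow_succ] at this
    convert this using 1
    ring

lemma near_pos : Near 27 1 ((δ ^ 27 : Rˣ) : R) := by
  refine ⟨⟨2880262017442, 2286065478215, 1814451372493⟩, ?_⟩
  rw [Units.val_pow_eq_pow_val]
  ext <;> decide +kernel

lemma near_neg : Near 27 (-1) (((δ ^ 27)⁻¹ : Rˣ) : R) := by
  refine ⟨⟨70840, -38973, -13692⟩, ?_⟩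
  rw [← inv_pow, Units.val_pow_eq_pow_val]
  ext <;> decide +kernel

lemma near_zpow (n : ℤ) : Near 27 n (((δ ^ 27) ^ n : Rˣ) : R) := by
  obtain ⟨m, rfl | rfl⟩ := n.eq_nat_or_neg
  · simpa using near_pos.pow (dvd_refl _) m
  · have := near_neg.pow (dvd_refl _) m
    rw [zpow_neg, ← inv_zpow, zpow_natCast, Units.val_pow_eq_pow_val]
    simpa using this

/-- The coefficient `k` is the prime-to-`3` part of `n` up to sign; it does not vanish modulo `3`. -/
lemma near_of_ne_zero (n : ℤ) (hn : n ≠ 0) :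
    ∃ M k : ℤ, M ≠ 0 ∧ ¬ 3 ∣ k ∧ Near M k (((δ ^ 27) ^ n : Rˣ) : R) := by
  have main : ∀ (l : ℤ) (u : Rˣ) (m : ℕ), m ≠ 0 → ¬ 3 ∣ l → Near 27 l (u : R) →
      ∃ M k : ℤ, M ≠ 0 ∧ ¬ 3 ∣ k ∧ Near M k ((u : R) ^ m) := by
    intro l u m hm hl hu
    obtain ⟨j, q, hq, rfl⟩ := Nat.exists_eq_pow_mul_and_not_dvd hm 3 (by norm_num)
    refine ⟨27 * 3 ^ j, q * l, by positivity, ?_, ?_⟩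
    · intro h
      rcases Int.Prime.dvd_mul' Nat.prime_three h with h | h
      · exact hq (by exact_mod_cast h)
      · exact hl h
    · rw [pow_mul]
      exact (hu.pow_three_pow j).pow (Dvd.intro _ rfl) q
  obtain ⟨m, rfl | rfl⟩ := n.eq_nat_or_neg
  · simpa using main 1 (δ ^ 27) m (by simpa using hn) (by norm_num) near_pos
  · have := main (-1) (δ ^ 27)⁻¹ m (by simpa using hn) (by norm_num) near_neg
    rw [zpow_neg, ← inv_zpow, zpow_natCast, Units.val_pow_eq_pow_val]
    exact this

/-- The linear form on `ℤ[∛2] = ℤ³` with coefficients the coordinates of `l`. -/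
def lin (l x : R) : ℤ := l.a * x.a + l.b * x.b + l.c * x.c

lemma lin_expand (l p u γ : R) (N k : ℤ) :
    lin l (p * (1 + (N : R) * ((k : R) * u + 27 * γ)))
      = lin l p + N * (k * lin l (p * u) + 27 * lin l (p * γ)) := by
  have h : (27 : R) = ((27 : ℤ) : R) := by norm_cast
  rw [h]
  simp only [lin, R.mul_a, R.mul_b, R.mul_c, R.add_a, R.add_b, R.add_c, R.intCast_a, R.intCast_b,
    R.intCast_c, R.one_a, R.one_b, R.one_c]
  ring

/-- `δ^(r-2)`. The shift by `-2` makes `0 ≤ r < 27` cover the exponents `-2, 0, 1` of all powers of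
`δ` that turn out to be solutions. -/
def P (r : ℕ) : R := ⟨1, -2, 1⟩ * (δ : R) ^ r

lemma eq_P_mul (x : R) (hx : norm x = 1) :
    ∃ r < 27, ∃ n : ℤ, x = P r * (((δ ^ 27) ^ n : Rˣ) : R) := by
  obtain ⟨m, rfl⟩ := eq_zpow_of_norm_eq_one x hx
  have h2 : (⟨1, -2, 1⟩ : R) = ((δ ^ (-2 : ℤ) : Rˣ) : R) := by
    rw [zpow_neg, ← inv_zpow]
    ext <;> decide +kernel
  refine ⟨((m + 2) % 27).toNat, by omega, (m + 2) / 27, ?_⟩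
  rw [P, h2, ← Units.val_pow_eq_pow_val, ← Units.val_mul, ← Units.val_mul]
  congr 1
  rw [← zpow_natCast δ, ← zpow_natCast δ, ← zpow_mul, ← zpow_add, ← zpow_add]
  congr 1
  push_cast
  omega

/-- Skolem's method. In a residue class `r` of exponents either `δ^(r-2)` is a zero of the linear
form `l` and a simple one modulo `27`, or the form has no zero modulo `27²` on the class, since its
values there are `lin l (P r) + 27 n lin l (P r * β)` modulo `27²`. Then the
zeros of `l` on the elements of norm `1` are among the `27` elements `P r`. -/
lemma skolem (l : R)
    (hl : ∀ r < 27, (lin l (P r) = 0 ∧ ¬ 27 ∣ lin l (P r * β)) ∨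
      ¬ (Int.gcd 729 (27 * lin l (P r * β)) : ℤ) ∣ lin l (P r))
    (x : R) (hx : norm x = 1) (h0 : lin l x = 0) : ∃ r < 27, x = P r := by
  obtain ⟨r, hr, n, rfl⟩ := eq_P_mul x hx
  refine ⟨r, hr, ?_⟩
  rcases hl r hr with ⟨hz, hnd⟩ | hnd
  · by_cases hn : n = 0
    · simp [hn]
    · obtain ⟨M, k, hM, hk, γ, hγ⟩ := near_of_ne_zero n hn
      rw [hγ, lin_expand, hz, zero_add] at h0
      have h1 := (mul_eq_zero.1 h0).resolve_left hM
      have hco : IsCoprime (27 : ℤ) k := by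
        have : IsCoprime (3 : ℤ) k := (Int.prime_three.coprime_iff_not_dvd).2 hk
        simpa using this.pow_left (m := 3)
      exact absurd (hco.dvd_of_dvd_mul_left ⟨-lin l (P r * γ), by linarith⟩) hnd
  · obtain ⟨γ, hγ⟩ := near_zpow n
    rw [hγ, lin_expand] at h0
    refine absurd ?_ hnd
    have h3 : lin l (P r) = 729 * (-lin l (P r * γ)) + 27 * lin l (P r * β) * (-n) := by linarith
    rw [h3]
    exact dvd_add ((Int.gcd_dvd_left _ _).mul_right _) ((Int.gcd_dvd_right _ _).mul_right _)

lemma thue_one (T s : ℤ) (h : T ^ 3 - 6 * T * s ^ 2 + 6 * s ^ 3 = 1) :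
    T = 1 ∧ (s = 0 ∨ s = 1) := by
  obtain ⟨r, hr, hP⟩ := skolem ⟨0, 1, -1⟩ (by decide +kernel) ⟨T, s, s⟩
    (by rw [norm_apply]; linarith) (by simp [lin])
  have hz : ∀ r < 27, (P r).b = (P r).c → r = 2 ∨ r = 3 := by decide +kernel
  have e2 : P 2 = ⟨1, 0, 0⟩ := by ext <;> decide +kernel
  have e3 : P 3 = ⟨1, 1, 1⟩ := by ext <;> decide +kernel
  rcases hz r hr (by rw [← hP]) with rfl | rfl
  · rw [e2] at hP; simp at hP; omega
  · rw [e3] at hP; simp at hP; omega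

lemma thue_two (T s : ℤ) (h : 3 * s ^ 3 - 6 * T * s ^ 2 + 4 * T ^ 3 = 1) : T = 1 ∧ s = 1 := by
  obtain ⟨r, hr, hP⟩ := skolem ⟨1, -1, 0⟩ (by decide +kernel) ⟨s, s, T⟩
    (by rw [norm_apply]; linarith) (by simp [lin])
  have hz : ∀ r < 27, (P r).a = (P r).b → r = 3 := by decide +kernel
  have e3 : P 3 = ⟨1, 1, 1⟩ := by ext <;> decide +kernel
  obtain rfl := hz r hr (by rw [← hP])
  rw [e3] at hP; simp at hP; omega

lemma thue_three (T s : ℤ) (h : 2 * s ^ 3 - 6 * T * s ^ 2 + 9 * T ^ 3 = 1) :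
    T = 1 ∧ (s = -1 ∨ s = 2) := by
  obtain ⟨r, hr, hP⟩ := skolem ⟨1, 0, -1⟩ (by decide +kernel) ⟨T, s - T, T⟩
    (by rw [norm_apply]; linarith) (by simp [lin])
  have hz : ∀ r < 27, (P r).a = (P r).c → r = 0 ∨ r = 3 := by decide +kernel
  have e0 : P 0 = ⟨1, -2, 1⟩ := by ext <;> decide +kernel
  have e3 : P 3 = ⟨1, 1, 1⟩ := by ext <;> decide +kernel
  rcases hz r hr (by rw [← hP]) with rfl | rfl
  · rw [e0] at hP; simp at hP; omega
  · rw [e3] at hP; simp at hP; omega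

lemma thue_six (T s : ℤ) (h : s ^ 3 - 6 * T * s ^ 2 + 36 * T ^ 3 = 1) : T = 0 ∧ s = 1 := by
  obtain ⟨r, hr, hP⟩ := skolem ⟨0, 1, -2⟩ (by decide +kernel) ⟨s - 2 * T, 2 * T, T⟩
    (by rw [norm_apply]; linarith) (by simp [lin])
  have hz : ∀ r < 27, (P r).b = 2 * (P r).c → r = 2 := by decide +kernel
  have e2 : P 2 = ⟨1, 0, 0⟩ := by ext <;> decide +kernel
  obtain rfl := hz r hr (by rw [← hP])
  rw [e2] at hP; simp at hP; omega

/-- With `g = gcd(d, w)` and `d = g d'`, the equation gives `g² ∣ d'`; the cofactor `e` is prime to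
`s = w / g` and divides `6 s³`. -/
lemma descent (d w : ℤ) (hd : d ≠ 0) (h : d ^ 3 - 6 * d * w ^ 2 + 6 * w ^ 3 = d) :
    ∃ e g s : ℤ, e ∣ 6 ∧ g ≠ 0 ∧ d = e * g ^ 3 ∧ w = g * s ∧
      e ^ 3 * (g ^ 2) ^ 3 - 6 * e * g ^ 2 * s ^ 2 + 6 * s ^ 3 = e := by
  obtain ⟨g, d', s, hg, hco, rfl, rfl⟩ : ∃ g d' s : ℤ, g ≠ 0 ∧ IsCoprime d' s ∧
      d = g * d' ∧ w = g * s := by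
    have hg : 0 < Int.gcd d w := Int.gcd_pos_of_ne_zero_left _ hd
    obtain ⟨d', s, hco, h1, h2⟩ := Int.exists_gcd_one hg
    exact ⟨Int.gcd d w, d', s, by positivity, Int.isCoprime_iff_gcd_eq_one.2 hco,
      by rw [mul_comm]; exact h1, by rw [mul_comm]; exact h2⟩
  have h1 : g ^ 2 * (d' ^ 3 - 6 * d' * s ^ 2 + 6 * s ^ 3) = d' := by
    apply mul_left_cancel₀ hg
    linear_combination h
  obtain ⟨e, he⟩ : g ^ 2 ∣ d' := Dvd.intro _ h1
  have h2 : e ^ 3 * (g ^ 2) ^ 3 - 6 * e * g ^ 2 * s ^ 2 + 6 * s ^ 3 = e := by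
    apply mul_left_cancel₀ (pow_ne_zero 2 hg)
    rw [he] at h1
    linear_combination h1
  refine ⟨e, g, s, ?_, hg, by rw [he]; ring, rfl, h2⟩
  have hes : IsCoprime e (s ^ 3) := (hco.of_isCoprime_of_dvd_left ⟨g ^ 2, by rw [he]; ring⟩).pow_right
  exact hes.dvd_of_dvd_mul_right
    ⟨1 - e ^ 2 * (g ^ 2) ^ 3 + 6 * g ^ 2 * s ^ 2, by linear_combination h2⟩

lemma solutions (d w : ℤ) (h : d ^ 3 - 6 * d * w ^ 2 + 6 * w ^ 3 = d)
    (hx : 2 ≤ w - d) (hy : 2 ≤ 2 * w - d) : d = -3 ∧ w = 1 := by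
  have hd : d ≠ 0 := by
    rintro rfl
    have : w = 0 := by simpa using h
    omega
  obtain ⟨e, g, s, he, hg, hdg, hws, hE⟩ := descent d w hd h
  have hT : g ^ 2 ≠ 0 := pow_ne_zero 2 hg
  have hg1 : g ^ 2 = 1 → g = 1 ∨ g = -1 := fun h => by
    simpa using h
  have he6 : e ≤ 6 := Int.le_of_dvd (by norm_num) he
  have he6' : -e ≤ 6 := Int.le_of_dvd (by norm_num) (by simpa using he)
  have he7 : -6 ≤ e := by omega
  generalize hTT : g ^ 2 = T at *
  -- A negative `e` is reduced to `-e` by the substitution `s ↦ -s`.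
  have key : T = 1 ∧ ((e = 1 ∧ (s = 0 ∨ s = 1)) ∨ (e = -1 ∧ (s = 0 ∨ s = -1)) ∨
      (e = 2 ∧ s = 1) ∨ (e = -2 ∧ s = -1) ∨ (e = 3 ∧ (s = -1 ∨ s = 2)) ∨
      (e = -3 ∧ (s = 1 ∨ s = -2))) := by
    interval_cases e <;> first | exact absurd he (by decide) | skip
    · have := thue_six T (-s) (by linarith); omega
    · have := thue_three T (-s) (by linarith); omega
    · have := thue_two T (-s) (by linarith); omega
    · have := thue_one T (-s) (by linarith); omega
    · have := thue_one T s (by linarith); omega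
    · have := thue_two T s (by linarith); omega
    · have := thue_three T s (by linarith); omega
    · have := thue_six T s (by linarith); omega
  obtain ⟨hT1, hc⟩ := key
  have hcube : g = 1 ∨ g = -1 := hg1 hT1
  rcases hcube with rfl | rfl <;>
    rcases hc with ⟨rfl, rfl | rfl⟩ | ⟨rfl, rfl | rfl⟩ | ⟨rfl, rfl⟩ | ⟨rfl, rfl⟩ |
      ⟨rfl, rfl | rfl⟩ | ⟨rfl, rfl | rfl⟩ <;> norm_num at hdg hws <;> omega

end Tetrahedral

/-- The only pair of positive integers `(a, b)` satisfying
`b(b+1)(b+2) = 2·a(a+1)(a+2)` is `a = 3`, `b = 4`. -/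
theorem stmt_0 (a b : ℕ) :
    (0 < a ∧ 0 < b ∧ b * (b + 1) * (b + 2) = 2 * (a * (a + 1) * (a + 2))) ↔
      (a = 3 ∧ b = 4) := by
  constructor
  · rintro ⟨ha, hb, h⟩
    have hz : (b : ℤ) * (b + 1) * (b + 2) = 2 * (a * (a + 1) * (a + 2)) := by exact_mod_cast h
    have := Tetrahedral.solutions ((b + 1 : ℤ) - 2 * (a + 1)) (b - a)
      (by linear_combination hz) (by omega) (by omega)
    omega
  · rintro ⟨rfl, rfl⟩
    norm_num
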